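/- Let S₁, S₂, S₃, S₄ be pairwise disjoint finite sets of points in ℝ² with S_i ⊆ Q_i for i = 1, 2, 3, 4, |S₁| = |S₃| ≥ 2 and |S₂| = |S₄| ≥ 2, and let S = S₁ ∪ S₂ ∪ S₃ ∪ S₄. Suppose there exist points p_i, q_i ∈ S_i for i = 1, 2, 3, 4 with {p₁, p₂, p₃, p₄} ∩ {q₁, q₂, q₃, q₄} = ∅, such that the path p₁p₃p₄p₂ is acute and the path q₄q₂q₁q₃ is acute. Then S admits an acute spanning tour. -/

import Mathlib

open EuclideanGeometry Real

noncomputable section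

abbrev Plane := EuclideanSpace ℝ (Fin 2)

/-- The four closed quadrants of the plane. -/
def InQ1 (p : Plane) : Prop := 0 ≤ p 0 ∧ 0 ≤ p 1
def InQ2 (p : Plane) : Prop := p 0 ≤ 0 ∧ 0 ≤ p 1
def InQ3 (p : Plane) : Prop := p 0 ≤ 0 ∧ p 1 ≤ 0
def InQ4 (p : Plane) : Prop := 0 ≤ p 0 ∧ p 1 ≤ 0

/-! Traversing a cyclic sequence of directed edges `(x, y), (x', y'), …` visits `x, y, x', y', …`,
and all rotation angles are acute as soon as each edge and its successor form an acute path
`x y x' y'`. Two points of one quadrant and a point of the opposite quadrant always form a path with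
an acute angle at the latter, so any two edges from `S₁` to `S₃` may follow each other in either
order, and likewise any two edges from `S₄` to `S₂`. Hence match `S₁` with `S₃` and `S₄` with `S₂`,
and run through the first matching from `(q₁, q₃)` to `(p₁, p₃)` and then through the second from
`(p₄, p₂)` to `(q₄, q₂)`; the two acute paths of the hypothesis are exactly the two changes of
matching. -/

section Combinatorics

variable {α β : Type*} {R : α → α → α → Prop}

/-- A tour of `S`, that is, a cyclic enumeration of `S` without repetition, in which every three
consecutive points satisfy `R`. For acute tours `R a b c` says that `∠ a b c ≤ π / 2`.
The empty set has no tour, since `ZMod 0 = ℤ`. -/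
def HasTour (R : α → α → α → Prop) (S : Finset α) : Prop :=
  ∃ f : ZMod S.card → α,
    Function.Injective f ∧ Set.range f = ↑S ∧ ∀ i, R (f (i - 1)) (f i) (f (i + 1))

/-- The sets `A` and `B` face each other if every path of length two alternating between them
satisfies `R`. This is the only property of a pair of opposite quadrants that the tour needs. -/
def Facing (R : α → α → α → Prop) (A B : Set α) : Prop :=
  (∀ a ∈ A, ∀ b ∈ B, ∀ a' ∈ A, R a b a') ∧ ∀ b ∈ B, ∀ a ∈ A, ∀ b' ∈ B, R b a b'

/-- The directed edge `e'` may follow the directed edge `e`: the path through the endpoints of `e`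
and then those of `e'` satisfies `R` at its two inner points. -/
def EdgeStep (R : α → α → α → Prop) (e e' : α × α) : Prop :=
  R e.1 e.2 e'.1 ∧ R e.2 e'.1 e'.2

/-- The sequence of points visited when the directed edges `g 0, g 1, …` are traversed in turn, each
contributing its source and then its target. -/
def zigzag (g : ℕ → α × α) (k : ℕ) : α :=
  if k % 2 = 0 then (g (k / 2)).1 else (g (k / 2)).2

theorem zigzag_two_mul (g : ℕ → α × α) (j : ℕ) : zigzag g (2 * j) = (g j).1 := by
  simp [zigzag]

theorem zigzag_two_mul_add_one (g : ℕ → α × α) (j : ℕ) : zigzag g (2 * j + 1) = (g j).2 := by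
  simp [zigzag, Nat.mul_add_div]

theorem zigzag_periodic {g : ℕ → α × α} {m : ℕ} (hg : Function.Periodic g m) :
    Function.Periodic (zigzag g) (2 * m) := by
  intro k
  have hdiv : (k + 2 * m) / 2 = k / 2 + m := by omega
  simp only [zigzag, Nat.add_mul_mod_self_left, hdiv, hg (k / 2)]

theorem range_zigzag (g : ℕ → α × α) :
    Set.range (zigzag g) = Prod.fst '' Set.range g ∪ Prod.snd '' Set.range g := by
  ext x
  constructor
  · rintro ⟨k, rfl⟩
    obtain ⟨j, rfl | rfl⟩ := k.even_or_odd'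
    · exact .inl ⟨g j, ⟨j, rfl⟩, (zigzag_two_mul g j).symm⟩
    · exact .inr ⟨g j, ⟨j, rfl⟩, (zigzag_two_mul_add_one g j).symm⟩
  · rintro (⟨_, ⟨j, rfl⟩, rfl⟩ | ⟨_, ⟨j, rfl⟩, rfl⟩)
    · exact ⟨2 * j, zigzag_two_mul g j⟩
    · exact ⟨2 * j + 1, zigzag_two_mul_add_one g j⟩

theorem zigzag_consecutive {g : ℕ → α × α} (hg : ∀ k, EdgeStep R (g k) (g (k + 1))) (k : ℕ) :
    R (zigzag g k) (zigzag g (k + 1)) (zigzag g (k + 2)) := by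
  obtain ⟨j, rfl | rfl⟩ := k.even_or_odd'
  · rw [show 2 * j + 2 = 2 * (j + 1) by ring, zigzag_two_mul, zigzag_two_mul_add_one,
      zigzag_two_mul]
    exact (hg j).1
  · rw [show 2 * j + 1 + 1 = 2 * (j + 1) by ring, show 2 * j + 1 + 2 = 2 * (j + 1) + 1 by ring,
      zigzag_two_mul, zigzag_two_mul_add_one, zigzag_two_mul_add_one]
    exact (hg j).2

theorem hasTour_of_periodic {S : Finset α} {f : ℕ → α} (hper : Function.Periodic f S.card)
    (hrange : Set.range f = S) (hR : ∀ k, R (f k) (f (k + 1)) (f (k + 2))) : HasTour R S := by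
  classical
  have hmem : ∀ k, f k ∈ S := fun k ↦ by
    rw [← Finset.mem_coe, ← hrange]
    exact Set.mem_range_self k
  have : NeZero S.card := ⟨Finset.card_ne_zero_of_mem (hmem 0)⟩
  let F : ZMod S.card → α := fun i ↦ f i.val
  have hF : ∀ k : ℕ, F k = f k := fun k ↦ by
    simp only [F, ZMod.val_natCast, hper.map_mod_nat]
  have hFrange : Set.range F = S := by
    rw [← hrange, ← ZMod.natCast_zmod_surjective.range_comp F]
    exact congrArg Set.range (funext hF)
  have himage : Finset.univ.image F = S := by
    rw [← Finset.coe_inj, Finset.coe_image, Finset.coe_univ, Set.image_univ, hFrange]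
  have hinj : Function.Injective F := by
    rw [← Set.injOn_univ, ← Finset.coe_univ]
    exact Finset.injOn_of_card_image_eq (by rw [himage, Finset.card_univ, ZMod.card])
  refine ⟨F, hinj, hFrange, fun i ↦ ?_⟩
  obtain ⟨k, hk⟩ := ZMod.natCast_zmod_surjective (i - 1)
  obtain rfl : i = k + 1 := by rw [hk, sub_add_cancel]
  have := hR k
  rw [← hF k, ← hF (k + 1), ← hF (k + 2)] at this
  convert this using 2 <;> push_cast <;> ring

theorem exists_periodic_of_cycle_chain {r : β → β → Prop} {l : List β} (hl : l ≠ [])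
    (hchain : Cycle.Chain r l) :
    ∃ g : ℕ → β, Function.Periodic g l.length ∧ Set.range g = {x | x ∈ l} ∧
      ∀ k, r (g k) (g (k + 1)) := by
  have hpos : 0 < l.length := List.length_pos_of_ne_nil hl
  refine ⟨fun k ↦ l[k % l.length]'(Nat.mod_lt k hpos), fun k ↦ by simp, ?_, fun k ↦ ?_⟩
  · ext x
    constructor
    · rintro ⟨k, rfl⟩
      exact List.getElem_mem _
    · intro hx
      obtain ⟨k, hk, rfl⟩ := List.getElem_of_mem hx
      exact ⟨k, by simp only [Nat.mod_eq_of_lt hk]⟩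
  · obtain ⟨a, t, rfl⟩ := List.exists_cons_of_ne_nil hl
    rw [Cycle.chain_coe_cons, ← List.cons_append, List.isChain_iff_getElem] at hchain
    have hk := Nat.mod_lt k hpos
    have hstep := hchain (k % (a :: t).length) (by simpa using hk)
    rw [List.getElem_append_left hk] at hstep
    have hsucc : (k + 1) % (a :: t).length = (k % (a :: t).length + 1) % (a :: t).length := by
      rw [Nat.mod_add_mod]
    simp only [hsucc]
    obtain hlt | heq : k % (a :: t).length + 1 < (a :: t).length ∨
      k % (a :: t).length + 1 = (a :: t).length := by omega
    · simpa only [List.getElem_append_left hlt, Nat.mod_eq_of_lt hlt] using hstep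
    · simp only [heq, Nat.mod_self, List.getElem_cons_zero]
      simpa only [heq, List.getElem_concat_length] using hstep

theorem hasTour_of_cycle_chain {S : Finset α} {M : List (α × α)} (hM : M ≠ [])
    (hcard : S.card = 2 * M.length)
    (hmem : ∀ x, x ∈ S ↔ x ∈ M.map Prod.fst ∨ x ∈ M.map Prod.snd)
    (hchain : Cycle.Chain (EdgeStep R) M) : HasTour R S := by
  obtain ⟨g, hper, hrange, hstep⟩ := exists_periodic_of_cycle_chain hM hchain
  refine hasTour_of_periodic (hcard ▸ zigzag_periodic hper) ?_ (zigzag_consecutive hstep)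
  ext x
  simp [range_zigzag, hrange, hmem]

theorem cycle_chain_append {r : β → β → Prop} {a b c d : β} {l l' : List β}
    (h : (a :: (l ++ [b])).IsChain r) (h' : (c :: (l' ++ [d])).IsChain r) (hbc : r b c)
    (hda : r d a) : Cycle.Chain r ((a :: (l ++ [b])) ++ (c :: (l' ++ [d])) : List β) := by
  rw [List.cons_append, Cycle.chain_coe_cons, ← List.cons_append, ← List.cons_append]
  refine (h.append h' ?_).append (List.isChain_singleton a) ?_
  · rw [← List.cons_append, List.getLast?_concat]
    simpa using hbc
  · rw [List.getLast?_append_cons, ← List.cons_append, List.getLast?_concat]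
    simpa using hda

theorem Facing.isChain_edgeStep {A B : Set α} (h : Facing R A B) {M : List (α × α)}
    (hfst : ∀ x ∈ M.map Prod.fst, x ∈ A) (hsnd : ∀ x ∈ M.map Prod.snd, x ∈ B) :
    M.IsChain (EdgeStep R) := by
  refine (List.pairwise_of_forall_mem_list fun e he e' he' ↦ ?_).isChain
  have hA : ∀ e ∈ M, e.1 ∈ A := fun e he ↦ hfst _ (List.mem_map_of_mem he)
  have hB : ∀ e ∈ M, e.2 ∈ B := fun e he ↦ hsnd _ (List.mem_map_of_mem he)
  exact ⟨h.1 _ (hA e he) _ (hB e he) _ (hA e' he'), h.2 _ (hB e he) _ (hA e' he') _ (hB e' he')⟩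

theorem exists_list_with_endpoints {A : Finset α} {a a' : α} (ha : a ∈ A) (ha' : a' ∈ A)
    (hne : a ≠ a') :
    ∃ l : List α, l.length + 2 = A.card ∧ ∀ x, x ∈ a :: (l ++ [a']) ↔ x ∈ A := by
  classical
  have ha'_erase : a' ∈ A.erase a := Finset.mem_erase.mpr ⟨hne.symm, ha'⟩
  refine ⟨((A.erase a).erase a').toList, ?_, fun x ↦ ?_⟩
  · rw [Finset.length_toList, ← Finset.card_erase_add_one ha,
      ← Finset.card_erase_add_one ha'_erase]
  · simp only [List.mem_cons, List.mem_append, Finset.mem_toList, Finset.mem_erase]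
    grind

theorem exists_matching_with_endpoints {A : Finset α} {B : Finset β} (hcard : A.card = B.card)
    {a a' : α} {b b' : β} (ha : a ∈ A) (ha' : a' ∈ A) (hb : b ∈ B) (hb' : b' ∈ B)
    (hne : a ≠ a') (hne' : b ≠ b') :
    ∃ l : List (α × β), l.length + 2 = A.card ∧
      (∀ x, x ∈ ((a, b) :: (l ++ [(a', b')])).map Prod.fst ↔ x ∈ A) ∧
      ∀ y, y ∈ ((a, b) :: (l ++ [(a', b')])).map Prod.snd ↔ y ∈ B := by
  obtain ⟨lA, hlenA, hlA⟩ := exists_list_with_endpoints ha ha' hne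
  obtain ⟨lB, hlenB, hlB⟩ := exists_list_with_endpoints hb hb' hne'
  have hlen : lA.length = lB.length := by omega
  refine ⟨lA.zip lB, by simp [hlen, hlenB, hcard], ?_, ?_⟩
  · simpa [List.map_fst_zip hlen.le] using hlA
  · simpa [List.map_snd_zip hlen.ge] using hlB

theorem card_eq_add_of_coe_eq_union {S₁ S₂ S₃ S₄ S : Finset α}
    (hd12 : Disjoint S₁ S₂) (hd13 : Disjoint S₁ S₃) (hd14 : Disjoint S₁ S₄)
    (hd23 : Disjoint S₂ S₃) (hd24 : Disjoint S₂ S₄) (hd34 : Disjoint S₃ S₄)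
    (hS : (↑S : Set α) = ↑S₁ ∪ ↑S₂ ∪ ↑S₃ ∪ ↑S₄) :
    S.card = S₁.card + S₂.card + S₃.card + S₄.card := by
  classical
  obtain rfl : S = S₁ ∪ S₂ ∪ S₃ ∪ S₄ := by
    rw [← Finset.coe_inj, hS, Finset.coe_union, Finset.coe_union, Finset.coe_union]
  rw [Finset.card_union_of_disjoint, Finset.card_union_of_disjoint,
    Finset.card_union_of_disjoint hd12]
  · exact Finset.disjoint_union_left.mpr ⟨hd13, hd23⟩
  · exact Finset.disjoint_union_left.mpr ⟨Finset.disjoint_union_left.mpr ⟨hd14, hd24⟩, hd34⟩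

theorem acute_tour_of_upward_and_downward_general {R : α → α → α → Prop}
    {S₁ S₂ S₃ S₄ S : Finset α}
    (hR13 : Facing R S₁ S₃) (hR42 : Facing R S₄ S₂)
    (hd12 : Disjoint S₁ S₂) (hd13 : Disjoint S₁ S₃) (hd14 : Disjoint S₁ S₄)
    (hd23 : Disjoint S₂ S₃) (hd24 : Disjoint S₂ S₄) (hd34 : Disjoint S₃ S₄)
    (hc13 : S₁.card = S₃.card) (hc24 : S₂.card = S₄.card)
    (hS : (↑S : Set α) = ↑S₁ ∪ ↑S₂ ∪ ↑S₃ ∪ ↑S₄)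
    {p₁ p₂ p₃ p₄ q₁ q₂ q₃ q₄ : α}
    (hp₁ : p₁ ∈ S₁) (hp₂ : p₂ ∈ S₂) (hp₃ : p₃ ∈ S₃) (hp₄ : p₄ ∈ S₄)
    (hq₁ : q₁ ∈ S₁) (hq₂ : q₂ ∈ S₂) (hq₃ : q₃ ∈ S₃) (hq₄ : q₄ ∈ S₄)
    (hdisj : Disjoint ({p₁, p₂, p₃, p₄} : Set α) {q₁, q₂, q₃, q₄})
    (hP : R p₁ p₃ p₄ ∧ R p₃ p₄ p₂) (hQ : R q₄ q₂ q₁ ∧ R q₂ q₁ q₃) :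
    HasTour R S := by
  obtain ⟨l₁₃, hlen₁₃, hmem₁, hmem₃⟩ := exists_matching_with_endpoints hc13 hq₁ hp₁ hq₃ hp₃
    (hdisj.ne_of_mem (by simp) (by simp)).symm (hdisj.ne_of_mem (by simp) (by simp)).symm
  obtain ⟨l₄₂, hlen₄₂, hmem₄, hmem₂⟩ := exists_matching_with_endpoints hc24.symm hp₄ hq₄ hp₂ hq₂
    (hdisj.ne_of_mem (by simp) (by simp)) (hdisj.ne_of_mem (by simp) (by simp))
  have hchain₁₃ := hR13.isChain_edgeStep (fun x ↦ (hmem₁ x).mp) (fun x ↦ (hmem₃ x).mp)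
  have hchain₄₂ := hR42.isChain_edgeStep (fun x ↦ (hmem₄ x).mp) (fun x ↦ (hmem₂ x).mp)
  refine hasTour_of_cycle_chain (by simp) ?_ (fun x ↦ ?_)
    (cycle_chain_append hchain₁₃ hchain₄₂ hP hQ)
  · rw [card_eq_add_of_coe_eq_union hd12 hd13 hd14 hd23 hd24 hd34 hS]
    simp only [List.length_append, List.length_cons, List.length_nil]
    omega
  · rw [← Finset.mem_coe, hS, List.map_append, List.map_append, List.mem_append, List.mem_append,
      hmem₁, hmem₂, hmem₃, hmem₄]
    simp only [Set.mem_union, Finset.mem_coe]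
    tauto

end Combinatorics

section Quadrants

theorem angle_le_pi_div_two_of_forall_mul_nonneg {ι : Type*} [Fintype ι]
    {a b c : EuclideanSpace ℝ ι} (h : ∀ i, 0 ≤ (a i - b i) * (c i - b i)) :
    ∠ a b c ≤ π / 2 := by
  have hinner : 0 ≤ inner ℝ (a -ᵥ b) (c -ᵥ b) := by
    rw [PiLp.inner_apply]
    exact Finset.sum_nonneg fun i _ ↦ by simpa [mul_comm] using h i
  rw [EuclideanGeometry.angle, InnerProductGeometry.angle, Real.arccos_le_pi_div_two]
  positivity

theorem facing_of_forall_coord_separated {ι : Type*} [Fintype ι] {A B : Set (EuclideanSpace ℝ ι)}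
    (h : ∀ i, (∀ a ∈ A, ∀ b ∈ B, a i ≤ b i) ∨ ∀ a ∈ A, ∀ b ∈ B, b i ≤ a i) :
    Facing (fun a b c ↦ ∠ a b c ≤ π / 2) A B := by
  constructor
  · intro a ha b hb a' ha'
    refine angle_le_pi_div_two_of_forall_mul_nonneg fun i ↦ ?_
    obtain hle | hge := h i
    · exact mul_nonneg_of_nonpos_of_nonpos (sub_nonpos.mpr (hle a ha b hb))
        (sub_nonpos.mpr (hle a' ha' b hb))
    · exact mul_nonneg (sub_nonneg.mpr (hge a ha b hb)) (sub_nonneg.mpr (hge a' ha' b hb))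
  · intro b hb a ha b' hb'
    refine angle_le_pi_div_two_of_forall_mul_nonneg fun i ↦ ?_
    obtain hle | hge := h i
    · exact mul_nonneg (sub_nonneg.mpr (hle a ha b hb)) (sub_nonneg.mpr (hle a ha b' hb'))
    · exact mul_nonneg_of_nonpos_of_nonpos (sub_nonpos.mpr (hge a ha b hb))
        (sub_nonpos.mpr (hge a ha b' hb'))

theorem facing_of_inQ1_of_inQ3 {A B : Set Plane} (hA : ∀ p ∈ A, InQ1 p) (hB : ∀ p ∈ B, InQ3 p) :
    Facing (fun a b c ↦ ∠ a b c ≤ π / 2) A B :=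
  facing_of_forall_coord_separated <| Fin.forall_fin_two.mpr
    ⟨.inr fun a ha b hb ↦ (hB b hb).1.trans (hA a ha).1,
      .inr fun a ha b hb ↦ (hB b hb).2.trans (hA a ha).2⟩

theorem facing_of_inQ4_of_inQ2 {A B : Set Plane} (hA : ∀ p ∈ A, InQ4 p) (hB : ∀ p ∈ B, InQ2 p) :
    Facing (fun a b c ↦ ∠ a b c ≤ π / 2) A B :=
  facing_of_forall_coord_separated <| Fin.forall_fin_two.mpr
    ⟨.inr fun a ha b hb ↦ (hB b hb).1.trans (hA a ha).1,
      .inl fun a ha b hb ↦ (hA a ha).2.trans (hB b hb).2⟩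

end Quadrants

/-- **Case 1 of the construction.** If `S = S₁ ∪ S₂ ∪ S₃ ∪ S₄` with `Sᵢ` in the `i`-th closed
quadrant, `|S₁| = |S₃| ≥ 2`, `|S₂| = |S₄| ≥ 2`, and there are disjoint quadruples
`{p₁,p₂,p₃,p₄}` and `{q₁,q₂,q₃,q₄}` with `pᵢ, qᵢ ∈ Sᵢ` such that the paths `p₁p₃p₄p₂` and
`q₄q₂q₁q₃` are acute, then `S` admits an acute spanning tour. -/
theorem acute_tour_of_upward_and_downward
    (S₁ S₂ S₃ S₄ S : Finset Plane)
    (hQ1 : ∀ p ∈ S₁, InQ1 p) (hQ2 : ∀ p ∈ S₂, InQ2 p)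
    (hQ3 : ∀ p ∈ S₃, InQ3 p) (hQ4 : ∀ p ∈ S₄, InQ4 p)
    (hd12 : Disjoint S₁ S₂) (hd13 : Disjoint S₁ S₃) (hd14 : Disjoint S₁ S₄)
    (hd23 : Disjoint S₂ S₃) (hd24 : Disjoint S₂ S₄) (hd34 : Disjoint S₃ S₄)
    (hc13 : S₁.card = S₃.card) (hc24 : S₂.card = S₄.card)
    (h1 : 2 ≤ S₁.card) (h2 : 2 ≤ S₂.card)
    (hS : (↑S : Set Plane) = ↑S₁ ∪ ↑S₂ ∪ ↑S₃ ∪ ↑S₄)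
    (p₁ p₂ p₃ p₄ q₁ q₂ q₃ q₄ : Plane)
    (hp₁ : p₁ ∈ S₁) (hp₂ : p₂ ∈ S₂) (hp₃ : p₃ ∈ S₃) (hp₄ : p₄ ∈ S₄)
    (hq₁ : q₁ ∈ S₁) (hq₂ : q₂ ∈ S₂) (hq₃ : q₃ ∈ S₃) (hq₄ : q₄ ∈ S₄)
    (hdisj : ({p₁, p₂, p₃, p₄} : Set Plane) ∩ ({q₁, q₂, q₃, q₄} : Set Plane) = ∅)
    (hP : EuclideanGeometry.angle p₁ p₃ p₄ ≤ π / 2 ∧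
          EuclideanGeometry.angle p₃ p₄ p₂ ≤ π / 2)
    (hQ : EuclideanGeometry.angle q₄ q₂ q₁ ≤ π / 2 ∧
          EuclideanGeometry.angle q₂ q₁ q₃ ≤ π / 2) :
    ∃ f : ZMod S.card → Plane,
      Function.Injective f ∧ Set.range f = ↑S ∧
      ∀ i : ZMod S.card,
        EuclideanGeometry.angle (f (i - 1)) (f i) (f (i + 1)) ≤ π / 2 :=
  acute_tour_of_upward_and_downward_general (facing_of_inQ1_of_inQ3 hQ1 hQ3)
    (facing_of_inQ4_of_inQ2 hQ4 hQ2) hd12 hd13 hd14 hd23 hd24 hd34 hc13 hc24 hS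
    hp₁ hp₂ hp₃ hp₄ hq₁ hq₂ hq₃ hq₄ (Set.disjoint_iff_inter_eq_empty.mpr hdisj) hP hQ
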